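/- arXiv:1502.06159 — 2 statements merged into one kernel-verified Lean document; each statement's English description precedes it below -/
import Mathlib

section
/- Let X and Y be complete metric spaces, (x̄,ȳ) ∈ X×Y, and f : X×Y → ℝ∪{+∞} with f(x̄,ȳ)=0 satisfying (P1) and (P2). If f₊ is lower semicontinuous on a neighbourhood of (x̄,ȳ), then the error bound modulus equals the uniform strict outer slope: Er f(x̄,ȳ) = |∇f|^◇(x̄,ȳ). -/
open Filter Metric Set Topology ENNReal

/-- The parametric metric `d_ρ((x,y),(u,v)) = max{d(x,u), ρ·d(y,v)}` on a product. -/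
noncomputable def dRho {X Y : Type*} [MetricSpace X] [MetricSpace Y]
    (ρ : ℝ) (p q : X × Y) : ℝ :=
  max (dist p.1 q.1) (ρ * dist p.2 q.2)

/-- The nonlocal ρ-slope `|∇f|_ρ^◇(x,y)` of `f` at `p = (x,y)`. -/
noncomputable def nonlocalSlopeRho {X Y : Type*} [MetricSpace X] [MetricSpace Y]
    (f : X × Y → EReal) (ρ : ℝ) (p : X × Y) : ℝ≥0∞ :=
  ⨆ (q : X × Y) (_ : q ≠ p),
    ENNReal.ofReal (max ((f p - max (f q) 0).toReal) 0) / ENNReal.ofReal (dRho ρ p q)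

/-- The uniform strict outer slope `|∇f|^◇(x̄,ȳ)`. -/
noncomputable def uniformStrictOuterSlope {X Y : Type*} [MetricSpace X] [MetricSpace Y]
    (f : X × Y → EReal) (xbar : X) (ybar : Y) : ℝ≥0∞ :=
  ⨆ (ρ : ℝ) (_ : 0 < ρ),
    ⨅ (p : X × Y) (_ : dist p.1 xbar < ρ ∧ 0 < f p ∧ f p < (ρ : EReal)),
      nonlocalSlopeRho f ρ p

/-- An element of `ℝ∪{+∞}` (i.e. an `EReal` different from `⊥`), viewed in `[0,+∞]`
(negative values are sent to `0`). -/
noncomputable def ERealToENNReal (a : EReal) : ℝ≥0∞ :=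
  if a = ⊤ then ⊤ else ENNReal.ofReal a.toReal

/-- The error bound modulus
`Er f(x̄,ȳ) = liminf_{x→x̄, f(x,y)>0} f(x,y)/d(x,S(f))`, where
`S(f) = {x : f(x,ȳ) ≤ 0}`. -/
noncomputable def errorBoundModulus {X Y : Type*} [MetricSpace X] [MetricSpace Y]
    (f : X × Y → EReal) (xbar : X) (ybar : Y) : ℝ≥0∞ :=
  ⨆ (δ : ℝ) (_ : 0 < δ),
    ⨅ (p : X × Y) (_ : dist p.1 xbar < δ ∧ 0 < f p),
      ERealToENNReal (f p) / ENNReal.ofReal (Metric.infDist p.1 {x : X | f (x, ybar) ≤ 0})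

/-!
Both inequalities compare the value `f₊ p` with `γ` times a distance.

If `γ < Er f`, a point `p` near `(x̄, ȳ)` has some `x ∈ S(f)` with `γ * d(p.1, x) < f p`, and (P2)
with constant `c` gives `γ * ρ * d(p.2, ȳ) < f p` once `γ * ρ < c`. So `(x, ȳ)` witnesses that the
`ρ`-slope at `p` exceeds `γ`.

If `γ` is below the strict outer slope, Ekeland's variational principle for `f₊` and `γ * d_ρ`,
started at `p`, yields a point `q` with `f₊ q + γ * d_ρ(p, q) ≤ f₊ p` at which the `ρ`-slope is at
most `γ`. As `q` is still close to `(x̄, ȳ)`, this forces `f q ≤ 0`, whence `q.1 ∈ S(f)` by (P1) and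
`γ * d(p.1, S(f)) ≤ f₊ p`.
-/

section Ekeland

variable {Z : Type*}

/-- The Dancs–Hegedűs–Medvegyev theorem. -/
theorem exists_mem_eq_singleton_of_isClosed [EMetricSpace Z] [CompleteSpace Z]
    {E : Z → Set Z} {z₀ : Z} (hself : ∀ z, z ∈ E z) (hsub : ∀ z, ∀ w ∈ E z, E w ⊆ E z)
    (hclosed : ∀ z ∈ E z₀, IsClosed (E z))
    (hsmall : ∀ z ∈ E z₀, ∀ ε : ℝ≥0∞, 0 < ε → ∃ w ∈ E z, E w ⊆ closedEBall w ε) :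
    ∃ q ∈ E z₀, E q = {q} := by
  have hstep (n : ℕ) (z : E z₀) :
      ∃ w : E z₀, w.1 ∈ E z ∧ E w ⊆ closedEBall w.1 (1 / 2 ^ n) := by
    obtain ⟨w, hwz, hw⟩ := hsmall z z.2 (1 / 2 ^ n) (by simp)
    exact ⟨⟨w, hsub z₀ z z.2 hwz⟩, hwz, hw⟩
  choose next hnext_mem hnext_small using hstep
  let z : ℕ → E z₀ := fun n => Nat.rec ⟨z₀, hself z₀⟩ next n
  have hanti : Antitone fun n => E (z n).1 :=
    antitone_nat_of_succ_le fun n => hsub _ _ (hnext_mem n (z n))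
  have hedist (n : ℕ) {u : Z} (hu : u ∈ E (z (n + 1))) : edist (z (n + 1)).1 u ≤ 1 / 2 ^ n :=
    mem_closedEBall'.1 (hnext_small n (z n) hu)
  have hcauchy : CauchySeq fun n => (z (n + 1)).1 :=
    cauchySeq_of_edist_le_geometric_two 1 one_ne_top fun n =>
      hedist n (hanti (n + 1).le_succ (hself _))
  obtain ⟨q, hq⟩ := cauchySeq_tendsto_of_complete hcauchy
  have hqE (n : ℕ) : q ∈ E (z n).1 := by
    refine (hclosed _ (z n).2).mem_of_tendsto hq ?_
    filter_upwards [eventually_ge_atTop n] with k hk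
    exact hanti (hk.trans (Nat.le_succ k)) (hself _)
  refine ⟨q, hqE 0, eq_singleton_iff_unique_mem.2 ⟨hself q, fun u hu => ?_⟩⟩
  have hpow : Tendsto (fun n : ℕ => (1 : ℝ≥0∞) / 2 ^ n) atTop (𝓝 0) := by
    simp [ENNReal.inv_pow]
  have hu_lim : Tendsto (fun n => (z (n + 1)).1) atTop (𝓝 u) :=
    tendsto_iff_edist_tendsto_0.2 <| tendsto_of_tendsto_of_tendsto_of_le_of_le tendsto_const_nhds
      hpow (fun _ => zero_le) fun n => hedist n (hsub _ _ (hqE (n + 1)) hu)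
  exact tendsto_nhds_unique hu_lim hq

/-- The points `w` at which `φ` has dropped, relative to `z`, by at least the cost `D z w` of moving
from `z` to `w`. Ekeland's principle looks for a point whose descent set is a singleton. -/
def descentSet (φ : Z → ℝ≥0∞) (D : Z → Z → ℝ≥0∞) (z : Z) : Set Z :=
  {w | φ w + D z w ≤ φ z}

variable {φ : Z → ℝ≥0∞} {D : Z → Z → ℝ≥0∞} {z₀ z w : Z}

lemma self_mem_descentSet (hself : D z z = 0) : z ∈ descentSet φ D z := by
  simp [descentSet, hself]

lemma apply_le_of_mem_descentSet (hw : w ∈ descentSet φ D z) : φ w ≤ φ z :=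
  le_self_add.trans hw

lemma cost_le_of_mem_descentSet (hw : w ∈ descentSet φ D z) : D z w ≤ φ z :=
  le_add_self.trans hw

lemma descentSet_subset (htri : ∀ a b c, D a c ≤ D a b + D b c) (hw : w ∈ descentSet φ D z) :
    descentSet φ D w ⊆ descentSet φ D z := fun u hu =>
  calc φ u + D z u ≤ φ u + (D z w + D w u) := by gcongr; exact htri z w u
    _ = (φ u + D w u) + D z w := by ring
    _ ≤ φ w + D z w := by gcongr; exact hu
    _ ≤ φ z := hw

lemma isClosed_descentSet [TopologicalSpace Z] (htri : ∀ a b c, D a c ≤ D a b + D b c)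
    (hD : ∀ a, LowerSemicontinuous (D a))
    (hφ : LowerSemicontinuousOn φ {w | D z₀ w ≤ φ z₀}) (hz : z ∈ descentSet φ D z₀) :
    IsClosed (descentSet φ D z) := by
  have hsub : descentSet φ D z ⊆ {w | D z₀ w ≤ φ z₀} := fun w hw =>
    cost_le_of_mem_descentSet (descentSet_subset htri hz hw)
  have hlsc := hφ.add ((hD z).lowerSemicontinuousOn _)
  obtain ⟨V, hV, hVeq⟩ := lowerSemicontinuousOn_iff_preimage_Iic.1 hlsc (φ z)
  rw [← inter_eq_right.2 hsub]
  exact hVeq ▸ ((hD z₀).isClosed_preimage (φ z₀)).inter hV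

lemma exists_mem_descentSet_subset_closedEBall [PseudoEMetricSpace Z] (hself : D z z = 0)
    (htri : ∀ a b c, D a c ≤ D a b + D b c) {m : NNReal} (hm : m ≠ 0)
    (hmD : ∀ a b, m * edist a b ≤ D a b) (hz : φ z ≠ ⊤) {ε : ℝ≥0∞} (hε : 0 < ε) :
    ∃ w ∈ descentSet φ D z, descentSet φ D w ⊆ closedEBall w ε := by
  set i := ⨅ w ∈ descentSet φ D z, φ w with hi
  have hi_top : i ≠ ⊤ := ne_top_of_le_ne_top hz (iInf₂_le z (self_mem_descentSet hself))
  have hlt : i < i + m * ε := ENNReal.lt_add_right hi_top (by simp [hm, hε.ne'])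
  obtain ⟨w, hwz, hw⟩ : ∃ w ∈ descentSet φ D z, φ w < i + m * ε := by
    simpa [hi, iInf_lt_iff] using hlt
  refine ⟨w, hwz, fun u hu => mem_closedEBall'.2 ?_⟩
  have huz : u ∈ descentSet φ D z := descentSet_subset htri hwz hu
  have hcost : φ u + D w u ≤ φ u + m * ε :=
    calc φ u + D w u ≤ φ w := hu
      _ ≤ i + m * ε := hw.le
      _ ≤ φ u + m * ε := by gcongr; exact iInf₂_le u huz
  have hu_top : φ u ≠ ⊤ := ne_top_of_le_ne_top hz (apply_le_of_mem_descentSet huz)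
  have hmul : m * edist w u ≤ m * ε :=
    (hmD w u).trans ((ENNReal.add_le_add_iff_left hu_top).1 hcost)
  exact (ENNReal.mul_le_mul_iff_right (by simpa using hm) coe_ne_top).1 hmul

theorem ekeland_variational_principle [EMetricSpace Z] [CompleteSpace Z] (hself : ∀ a, D a a = 0)
    (htri : ∀ a b c, D a c ≤ D a b + D b c) (hD : ∀ a, LowerSemicontinuous (D a)) {m : NNReal}
    (hm : m ≠ 0) (hmD : ∀ a b, m * edist a b ≤ D a b) (hz₀ : φ z₀ ≠ ⊤)
    (hφ : LowerSemicontinuousOn φ {w | D z₀ w ≤ φ z₀}) :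
    ∃ q, φ q + D z₀ q ≤ φ z₀ ∧ ∀ u, u ≠ q → φ q < φ u + D q u := by
  obtain ⟨q, hq, hq_eq⟩ := exists_mem_eq_singleton_of_isClosed (z₀ := z₀) (E := descentSet φ D)
    (fun z => self_mem_descentSet (hself z)) (fun _ _ => descentSet_subset htri)
    (fun _ => isClosed_descentSet htri hD hφ)
    (fun z hz _ => exists_mem_descentSet_subset_closedEBall (hself z) htri hm hmD
      (ne_top_of_le_ne_top hz₀ (apply_le_of_mem_descentSet hz)))
  refine ⟨q, hq, fun u hu => lt_of_not_ge fun hle => hu ?_⟩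
  exact mem_singleton_iff.1 (hq_eq ▸ (hle : u ∈ descentSet φ D q))

end Ekeland

section ParametricMetric

variable {X Y : Type*} [MetricSpace X] [MetricSpace Y] {ρ : ℝ}

lemma dRho_self (p : X × Y) : dRho ρ p p = 0 := by
  simp [dRho]

lemma dRho_comm (p q : X × Y) : dRho ρ p q = dRho ρ q p := by
  simp only [dRho, dist_comm]

lemma dRho_pos (hρ : 0 < ρ) {p q : X × Y} (h : p ≠ q) : 0 < dRho ρ p q := by
  rcases not_and_or.1 (mt Prod.ext_iff.2 h) with hx | hy
  · exact lt_max_of_lt_left (dist_pos.2 hx)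
  · exact lt_max_of_lt_right (mul_pos hρ (dist_pos.2 hy))

lemma dRho_triangle (hρ : 0 ≤ ρ) (p q s : X × Y) : dRho ρ p s ≤ dRho ρ p q + dRho ρ q s := by
  refine max_le ?_ ?_
  · exact (dist_triangle _ q.1 _).trans (add_le_add (le_max_left _ _) (le_max_left _ _))
  · calc ρ * dist p.2 s.2 ≤ ρ * (dist p.2 q.2 + dist q.2 s.2) := by
          gcongr; exact dist_triangle _ _ _
      _ = ρ * dist p.2 q.2 + ρ * dist q.2 s.2 := mul_add _ _ _
      _ ≤ dRho ρ p q + dRho ρ q s := add_le_add (le_max_right _ _) (le_max_right _ _)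

lemma continuous_dRho (p : X × Y) : Continuous (dRho ρ p) := by
  unfold dRho
  fun_prop

lemma min_one_mul_dist_le_dRho (hρ : 0 ≤ ρ) (p q : X × Y) : min 1 ρ * dist p q ≤ dRho ρ p q := by
  rw [Prod.dist_eq, mul_max_of_nonneg _ _ (le_min zero_le_one hρ)]
  refine max_le_max (mul_le_of_le_one_left dist_nonneg (min_le_left _ _)) ?_
  gcongr
  exact min_le_right _ _

lemma ofReal_dRho (hρ : 0 ≤ ρ) (p q : X × Y) :
    ENNReal.ofReal (dRho ρ p q) =
      max (edist p.1 q.1) (ENNReal.ofReal ρ * edist p.2 q.2) := by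
  rw [dRho, ENNReal.ofReal_max, ENNReal.ofReal_mul hρ, edist_dist, edist_dist]

lemma exists_pos_forall_dRho_lt_mem (hρ : 0 < ρ) {z : X × Y} {U : Set (X × Y)} (hU : U ∈ 𝓝 z) :
    ∃ r > 0, ∀ q, dRho ρ q z < r → q ∈ U := by
  obtain ⟨r, hr, hrU⟩ := Metric.mem_nhds_iff.1 hU
  have hmin : 0 < min 1 ρ := lt_min one_pos hρ
  refine ⟨min 1 ρ * r, mul_pos hmin hr, fun q hq => hrU (mem_ball.2 ?_)⟩
  exact lt_of_mul_lt_mul_left ((min_one_mul_dist_le_dRho hρ.le q z).trans_lt hq) hmin.le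

lemma dRho_lt_max_mul {x : X} {y : Y} {p : X × Y} {c t δ : ℝ} (hρ : 0 < ρ) (hc : 0 < c)
    (hx : dist p.1 x < δ) (hy : c * dist p.2 y < t * δ) :
    dRho ρ p (x, y) < max 1 (ρ * t / c) * δ := by
  have hδ : 0 < δ := dist_nonneg.trans_lt hx
  have hy' : dist p.2 y < t * δ / c := (lt_div_iff₀' hc).2 hy
  refine max_lt ?_ ?_
  · exact hx.trans_le (le_mul_of_one_le_left hδ.le (le_max_left _ _))
  · calc ρ * dist p.2 y < ρ * (t * δ / c) := by gcongr
      _ = ρ * t / c * δ := by ring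
      _ ≤ max 1 (ρ * t / c) * δ := by gcongr; exact le_max_right _ _

theorem ekeland_variational_principle_dRho [CompleteSpace X] [CompleteSpace Y]
    {φ : X × Y → ℝ≥0∞} {p : X × Y} {γ : NNReal} (hρ : 0 < ρ) (hγ : 0 < γ) (hp : φ p ≠ ⊤)
    (hφ : LowerSemicontinuousOn φ {q | γ * ENNReal.ofReal (dRho ρ p q) ≤ φ p}) :
    ∃ q, φ q + γ * ENNReal.ofReal (dRho ρ p q) ≤ φ p ∧
      ∀ u, u ≠ q → φ q < φ u + γ * ENNReal.ofReal (dRho ρ q u) := by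
  have hmin : 0 < min 1 ρ := lt_min one_pos hρ
  refine ekeland_variational_principle (D := fun a b => γ * ENNReal.ofReal (dRho ρ a b))
    (m := γ * (min 1 ρ).toNNReal) (fun a => by simp [dRho_self]) (fun a b c => ?_) (fun a => ?_)
    (mul_pos hγ (Real.toNNReal_pos.2 hmin)).ne' (fun a b => ?_) hp hφ
  · rw [← mul_add]
    gcongr
    exact (ENNReal.ofReal_le_ofReal (dRho_triangle hρ.le a b c)).trans ENNReal.ofReal_add_le
  · exact ((ENNReal.continuous_const_mul coe_ne_top).comp
      (ENNReal.continuous_ofReal.comp (continuous_dRho a))).lowerSemicontinuous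
  · rw [ENNReal.coe_mul, mul_assoc]
    gcongr
    rw [← ENNReal.ofReal, edist_dist, ← ENNReal.ofReal_mul hmin.le]
    exact ENNReal.ofReal_le_ofReal (min_one_mul_dist_le_dRho hρ.le a b)

end ParametricMetric

section PositivePart

lemma toENNReal_max_zero (a : EReal) : (max a 0).toENNReal = a.toENNReal := by
  rcases le_total a 0 with ha | ha
  · rw [max_eq_right ha, EReal.toENNReal_zero, EReal.toENNReal_of_nonpos ha]
  · rw [max_eq_left ha]

lemma monotone_toENNReal : Monotone EReal.toENNReal := fun _ _ => EReal.toENNReal_le_toENNReal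

lemma lowerSemicontinuousOn_toENNReal {Z : Type*} [TopologicalSpace Z] {f : Z → EReal} {s : Set Z}
    (hf : LowerSemicontinuousOn (fun z => max (f z) 0) s) :
    LowerSemicontinuousOn (fun z => (f z).toENNReal) s := by
  simpa only [Function.comp_def, toENNReal_max_zero] using
    EReal.continuous_toENNReal.comp_lowerSemicontinuousOn hf monotone_toENNReal

lemma ofReal_mul_edist_le_toENNReal {Y : Type*} [PseudoMetricSpace Y] {y y' : Y} {c : ℝ}
    (hc : 0 ≤ c) {a : EReal} (h : ((c * dist y y' : ℝ) : EReal) ≤ a) :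
    ENNReal.ofReal c * edist y y' ≤ a.toENNReal := by
  rw [edist_dist, ← ENNReal.ofReal_mul hc, ← EReal.real_coe_toENNReal]
  exact monotone_toENNReal h

lemma ofReal_max_toReal_sub_max_zero {a : EReal} (ha : a ≠ ⊤) (b : EReal) :
    ENNReal.ofReal (max (a - max b 0).toReal 0) = a.toENNReal - b.toENNReal := by
  have hsub : a - max b 0 ≠ ⊤ :=
    ne_top_of_le_ne_top ha (by simpa using EReal.sub_le_sub le_rfl (le_max_right b 0))
  rw [ENNReal.ofReal_max, ENNReal.ofReal_zero, max_eq_left zero_le,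
    ← EReal.toENNReal_of_ne_top hsub, EReal.toENNReal_sub (le_max_right _ _), toENNReal_max_zero]

end PositivePart

section DistanceToSet

lemma exists_mem_mul_edist_lt {Z : Type*} [PseudoEMetricSpace Z] {z : Z} {s : Set Z} {a γ : ℝ≥0∞}
    (hγ : γ ≠ 0) (hγ_top : γ ≠ ⊤) (h : γ * infEDist z s < a) : ∃ w ∈ s, γ * edist z w < a := by
  simpa only [infEDist, ENNReal.mul_iInf_of_ne hγ hγ_top, iInf_lt_iff, exists_prop] using h

lemma ofReal_infDist {Z : Type*} [PseudoMetricSpace Z] {s : Set Z} (hs : s.Nonempty) (z : Z) :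
    ENNReal.ofReal (infDist z s) = infEDist z s :=
  ENNReal.ofReal_toReal (infEDist_ne_top hs)

end DistanceToSet

section Slope

variable {X Y : Type*} [MetricSpace X] [MetricSpace Y] {f : X × Y → EReal} {ρ : ℝ} {p : X × Y}

theorem lt_nonlocalSlopeRho_iff (hρ : 0 < ρ) (hp : f p ≠ ⊤) {γ : ℝ≥0∞} :
    γ < nonlocalSlopeRho f ρ p ↔
      ∃ q, q ≠ p ∧ (f q).toENNReal + γ * ENNReal.ofReal (dRho ρ p q) < (f p).toENNReal := by
  simp only [nonlocalSlopeRho, lt_iSup_iff, exists_prop]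
  refine exists_congr fun q => and_congr_right fun hqp => ?_
  have hd : ENNReal.ofReal (dRho ρ p q) ≠ 0 := by simpa using dRho_pos hρ hqp.symm
  rw [ofReal_max_toReal_sub_max_zero hp, ENNReal.lt_div_iff_mul_lt (.inl hd) (.inl ofReal_ne_top),
    lt_tsub_iff_left]

theorem lt_nonlocalSlopeRho_of_mul_infEDist_lt {y : Y} {γ : NNReal} (hρ : 0 < ρ) (hγ : 0 < γ)
    (hp : f p ≠ ⊤) (hx : γ * infEDist p.1 {x | f (x, y) ≤ 0} < (f p).toENNReal)
    (hy : γ * (ENNReal.ofReal ρ * edist p.2 y) < (f p).toENNReal) :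
    γ < nonlocalSlopeRho f ρ p := by
  obtain ⟨x, hxS, hx⟩ : ∃ x, f (x, y) ≤ 0 ∧ γ * edist p.1 x < (f p).toENNReal :=
    exists_mem_mul_edist_lt (by simpa using hγ.ne') coe_ne_top hx
  refine (lt_nonlocalSlopeRho_iff hρ hp).2 ⟨(x, y), ?_, ?_⟩
  · rintro rfl
    simp [EReal.toENNReal_of_nonpos hxS] at hx
  · rw [EReal.toENNReal_of_nonpos hxS, zero_add, ofReal_dRho hρ.le, mul_max]
    exact max_lt hx hy

theorem mul_infEDist_le_toENNReal_of_lt_nonlocalSlopeRho [CompleteSpace X] [CompleteSpace Y]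
    {y : Y} {γ : NNReal} (hρ : 0 < ρ) (hγ : 0 < γ) (hP1 : ∀ q : X × Y, q.2 ≠ y → 0 < f q)
    (hlsc : LowerSemicontinuousOn (fun q => max (f q) 0)
      {q | γ * ENNReal.ofReal (dRho ρ p q) ≤ (f p).toENNReal})
    (hslope : ∀ q, γ * ENNReal.ofReal (dRho ρ p q) ≤ (f p).toENNReal → 0 < f q →
      (f q).toENNReal ≤ (f p).toENNReal → γ < nonlocalSlopeRho f ρ q) :
    γ * infEDist p.1 {x | f (x, y) ≤ 0} ≤ (f p).toENNReal := by
  rcases eq_or_ne (f p) ⊤ with hp | hp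
  · simp [hp]
  obtain ⟨q, hq, hmin⟩ := ekeland_variational_principle_dRho hρ hγ
    (EReal.toENNReal_ne_top_iff.2 hp) (lowerSemicontinuousOn_toENNReal hlsc)
  have hdist : γ * ENNReal.ofReal (dRho ρ p q) ≤ (f p).toENNReal := le_add_self.trans hq
  have hval : (f q).toENNReal ≤ (f p).toENNReal := le_self_add.trans hq
  have hq_top : f q ≠ ⊤ := EReal.toENNReal_ne_top_iff.1
    (ne_top_of_le_ne_top (EReal.toENNReal_ne_top_iff.2 hp) hval)
  have hq_nonpos : f q ≤ 0 := not_lt.1 fun hq_pos => by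
    obtain ⟨u, huq, hu⟩ := (lt_nonlocalSlopeRho_iff hρ hq_top).1 (hslope q hdist hq_pos hval)
    exact (hmin u huq).not_gt hu
  have hqy : q.2 = y := not_imp_comm.1 (hP1 q) hq_nonpos.not_gt
  have hqS : q.1 ∈ {x | f (x, y) ≤ 0} := by simpa [← hqy] using hq_nonpos
  calc γ * infEDist p.1 {x | f (x, y) ≤ 0} ≤ γ * edist p.1 q.1 := by
        gcongr; exact infEDist_le_edist_of_mem hqS
    _ ≤ γ * ENNReal.ofReal (dRho ρ p q) := by
        gcongr; rw [ofReal_dRho hρ.le]; exact le_max_left _ _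
    _ ≤ (f p).toENNReal := hdist

end Slope

section ErrorBound

variable {X Y : Type*} [MetricSpace X] [MetricSpace Y] {f : X × Y → EReal} {xbar : X} {ybar : Y}

lemma le_errorBoundModulus (hf0 : f (xbar, ybar) ≤ 0) {γ : ℝ≥0∞} {δ : ℝ} (hδ : 0 < δ)
    (h : ∀ p : X × Y, dist p.1 xbar < δ → 0 < f p →
      γ * infEDist p.1 {x | f (x, ybar) ≤ 0} ≤ (f p).toENNReal) :
    γ ≤ errorBoundModulus f xbar ybar := by
  refine le_iSup₂_of_le δ hδ (le_iInf₂ fun p ⟨hpx, hp⟩ => ?_)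
  have hS : {x | f (x, ybar) ≤ 0}.Nonempty := ⟨xbar, hf0⟩
  rw [ofReal_infDist hS]
  exact (ENNReal.le_div_iff_mul_le (.inr (EReal.toENNReal_ne_zero_iff.2 hp))
    (.inl (infEDist_ne_top hS))).2 (h p hpx hp)

lemma exists_pos_forall_mul_infEDist_lt (hf0 : f (xbar, ybar) ≤ 0) {γ : ℝ≥0∞}
    (hγ : γ < errorBoundModulus f xbar ybar) :
    ∃ δ > 0, ∀ p : X × Y, dist p.1 xbar < δ → 0 < f p →
      γ * infEDist p.1 {x | f (x, ybar) ≤ 0} < (f p).toENNReal := by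
  simp only [errorBoundModulus, lt_iSup_iff] at hγ
  obtain ⟨δ, hδ, hγ⟩ := hγ
  refine ⟨δ, hδ, fun p hpx hp => ?_⟩
  rw [← ofReal_infDist ⟨xbar, hf0⟩]
  exact ENNReal.mul_lt_of_lt_div (hγ.trans_le (iInf₂_le p ⟨hpx, hp⟩))

variable {c ε : ℝ}

theorem errorBoundModulus_le_uniformStrictOuterSlope (hf0 : f (xbar, ybar) ≤ 0) (hc : 0 < c)
    (hε : 0 < ε) (hP2 : ∀ p : X × Y, 0 < f p → f p < (ε : EReal) →
      ((c * dist p.2 ybar : ℝ) : EReal) ≤ f p) :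
    errorBoundModulus f xbar ybar ≤ uniformStrictOuterSlope f xbar ybar := by
  refine ENNReal.le_of_forall_pos_nnreal_lt fun γ hγ hγ_lt => ?_
  obtain ⟨δ, hδ, hbound⟩ := exists_pos_forall_mul_infEDist_lt hf0 hγ_lt
  obtain ⟨ρ, hρ, hρδ, hρε, hγρ⟩ : ∃ ρ > 0, ρ ≤ δ ∧ ρ ≤ ε ∧ γ * ρ < c := by
    obtain ⟨t, ht, htc⟩ := exists_pos_mul_lt hc γ
    refine ⟨min t (min δ ε), by positivity, by simp, by simp, lt_of_le_of_lt ?_ htc⟩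
    gcongr
    exact min_le_left _ _
  refine le_iSup₂_of_le ρ hρ (le_iInf₂ fun p ⟨hpx, hp, hpρ⟩ => le_of_lt ?_)
  have hgrowth : ENNReal.ofReal c * edist p.2 ybar ≤ (f p).toENNReal :=
    ofReal_mul_edist_le_toENNReal hc.le (hP2 p hp (hpρ.trans_le (mod_cast hρε)))
  refine lt_nonlocalSlopeRho_of_mul_infEDist_lt hρ hγ hpρ.ne_top
    (hbound p (hpx.trans_le hρδ) hp) ?_
  rcases eq_or_ne (edist p.2 ybar) 0 with hy | hy
  · simpa [hy] using hp
  · calc γ * (ENNReal.ofReal ρ * edist p.2 ybar) = ENNReal.ofReal (γ * ρ) * edist p.2 ybar := by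
          rw [ENNReal.ofReal_mul γ.coe_nonneg, ENNReal.ofReal_coe_nnreal, mul_assoc]
      _ < ENNReal.ofReal c * edist p.2 ybar :=
          ENNReal.mul_lt_mul_left hy (edist_ne_top _ _) ((ENNReal.ofReal_lt_ofReal_iff hc).2 hγρ)
      _ ≤ (f p).toENNReal := hgrowth

lemma exists_pos_forall_lt_nonlocalSlopeRho {γ : ℝ≥0∞}
    (hγ : γ < uniformStrictOuterSlope f xbar ybar) :
    ∃ ρ > 0, ∀ q : X × Y, dist q.1 xbar < ρ → 0 < f q → f q < (ρ : EReal) →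
      γ < nonlocalSlopeRho f ρ q := by
  simp only [uniformStrictOuterSlope, lt_iSup_iff] at hγ
  obtain ⟨ρ, hρ, hγ⟩ := hγ
  exact ⟨ρ, hρ, fun q hqx hq hqρ => hγ.trans_le (iInf₂_le q ⟨hqx, hq, hqρ⟩)⟩

theorem uniformStrictOuterSlope_le_errorBoundModulus [CompleteSpace X] [CompleteSpace Y]
    (hf0 : f (xbar, ybar) ≤ 0) (hP1 : ∀ p : X × Y, p.2 ≠ ybar → 0 < f p) (hc : 0 < c)
    (hε : 0 < ε) (hP2 : ∀ p : X × Y, 0 < f p → f p < (ε : EReal) →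
      ((c * dist p.2 ybar : ℝ) : EReal) ≤ f p)
    {U : Set (X × Y)} (hU : U ∈ 𝓝 (xbar, ybar))
    (hlsc : LowerSemicontinuousOn (fun p => max (f p) 0) U) :
    uniformStrictOuterSlope f xbar ybar ≤ errorBoundModulus f xbar ybar := by
  refine ENNReal.le_of_forall_pos_nnreal_lt fun γ hγ hγ_lt => ?_
  obtain ⟨ρ, hρ, hslope⟩ := exists_pos_forall_lt_nonlocalSlopeRho hγ_lt
  obtain ⟨r, hr, hrU⟩ := exists_pos_forall_dRho_lt_mem hρ hU
  set K := max 1 (ρ * γ / c)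
  obtain ⟨δ, hδ, hδ_lt⟩ := exists_pos_mul_lt (lt_min hρ (lt_min hε hr)) (max (γ : ℝ) (1 + K))
  simp only [lt_min_iff, max_mul_of_nonneg _ _ hδ.le, max_lt_iff] at hδ_lt
  obtain ⟨⟨hγρ, hKρ⟩, ⟨hγε, -⟩, -, hKr⟩ := hδ_lt
  refine le_errorBoundModulus hf0 hδ fun p hpx hp => le_of_not_gt fun hlt => hlt.not_ge ?_
  have hpδ : (f p).toENNReal < γ * ENNReal.ofReal δ := by
    refine hlt.trans_le ?_
    gcongr
    calc infEDist p.1 {x | f (x, ybar) ≤ 0} ≤ edist p.1 xbar := infEDist_le_edist_of_mem hf0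
      _ ≤ ENNReal.ofReal δ := by rw [edist_dist]; exact ENNReal.ofReal_le_ofReal hpx.le
  have hsmall {q : X × Y} (hq : (f q).toENNReal ≤ (f p).toENNReal) :
      f q < ((γ * δ : ℝ) : EReal) := by
    refine monotone_toENNReal.reflect_lt (hq.trans_lt ?_)
    rwa [EReal.real_coe_toENNReal, ENNReal.ofReal_mul γ.coe_nonneg, ENNReal.ofReal_coe_nnreal]
  have hpε : f p < (ε : EReal) := (hsmall le_rfl).trans (mod_cast hγε)
  have hpK : dRho ρ p (xbar, ybar) < K * δ :=
    dRho_lt_max_mul hρ hc hpx (mod_cast (hP2 p hp hpε).trans_lt (hsmall le_rfl))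
  have hnear {q : X × Y} (hq : γ * ENNReal.ofReal (dRho ρ p q) ≤ (f p).toENNReal) :
      dRho ρ q (xbar, ybar) < (1 + K) * δ := by
    have hpq : dRho ρ p q < δ :=
      (ENNReal.ofReal_lt_ofReal_iff hδ).1 (lt_of_mul_lt_mul_left' (hq.trans_lt hpδ))
    calc dRho ρ q (xbar, ybar) ≤ dRho ρ q p + dRho ρ p (xbar, ybar) := dRho_triangle hρ.le _ _ _
      _ = dRho ρ p q + dRho ρ p (xbar, ybar) := by rw [dRho_comm]
      _ < (1 + K) * δ := by linarith
  refine mul_infEDist_le_toENNReal_of_lt_nonlocalSlopeRho hρ hγ hP1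
    (hlsc.mono fun q hq => hrU q ((hnear hq).trans hKr))
    fun q hq hq_pos hqp => hslope q ?_ hq_pos ?_
  · exact (le_max_left _ _).trans_lt ((hnear hq).trans hKρ)
  · exact (hsmall hqp).trans (mod_cast hγρ)

end ErrorBound

/-- Theorem 3T1 (ii): if `X` and `Y` are complete and `f₊` is lower semicontinuous on a
neighbourhood of `(x̄,ȳ)`, then the error bound modulus equals the uniform strict outer
slope: `Er f(x̄,ȳ) = |∇f|^◇(x̄,ȳ)`. -/
theorem errorBound_eq_uniformStrictSlope {X Y : Type*} [MetricSpace X] [MetricSpace Y]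
    [CompleteSpace X] [CompleteSpace Y]
    (xbar : X) (ybar : Y) (f : X × Y → EReal)
    (hfbot : ∀ p : X × Y, f p ≠ ⊥)
    (hf0 : f (xbar, ybar) = 0)
    (hP1 : ∀ p : X × Y, p.2 ≠ ybar → 0 < f p)
    (hP2 : ∃ c : ℝ, 0 < c ∧ ∃ ε : ℝ, 0 < ε ∧ ∀ p : X × Y,
      0 < f p → f p < (ε : EReal) → ((c * dist p.2 ybar : ℝ) : EReal) ≤ f p)
    (hlsc : ∃ U ∈ 𝓝 ((xbar, ybar) : X × Y),
      LowerSemicontinuousOn (fun p : X × Y => max (f p) 0) U) :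
    errorBoundModulus f xbar ybar = uniformStrictOuterSlope f xbar ybar := by
  obtain ⟨c, hc, ε, hε, hP2⟩ := hP2
  obtain ⟨U, hU, hlsc⟩ := hlsc
  exact le_antisymm (errorBoundModulus_le_uniformStrictOuterSlope hf0.le hc hε hP2)
    (uniformStrictOuterSlope_le_errorBoundModulus hf0.le hP1 hc hε hP2 hU hlsc)
end

section
/- Let X and Y be normed linear spaces, F : X ⇉ Y a set-valued mapping, (x̄,ȳ) ∈ gph F, φ : [0,∞) → [0,∞) continuously differentiable with φ(0)=0 and φ'(t)>0 for all t≥0, and g(y) := φ(‖y−ȳ‖). Then for every ρ>0 and every (x,y) ∈ gph F with y ≠ ȳ, the subdifferential (g,ρ)-slope of F factorizes as |∂F|_{g,ρ}(x,y) = φ'(‖y−ȳ‖) · |∂F|_{ξ_φ(y)ρ}(x,y), where ξ_φ(y) := 1/φ'(‖y−ȳ‖). -/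
open Filter Metric Set Topology ENNReal

/-- The graph of a set-valued mapping `F : X ⇉ Y`. -/
def svGraph {X Y : Type*} (F : X → Set Y) : Set (X × Y) := {p : X × Y | p.2 ∈ F p.1}

/-- The Fréchet normal cone to a subset `Ω` of a product of normed spaces (ε-form). -/
def prodNormalCone {X Y : Type*} [NormedAddCommGroup X] [NormedSpace ℝ X]
    [NormedAddCommGroup Y] [NormedSpace ℝ Y]
    (Ω : Set (X × Y)) (p : X × Y) : Set ((X →L[ℝ] ℝ) × (Y →L[ℝ] ℝ)) :=
  {s | p ∈ Ω ∧ ∀ ε : ℝ, 0 < ε → ∀ᶠ q : X × Y in 𝓝[Ω \ {p}] p,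
    s.1 (q.1 - p.1) + s.2 (q.2 - p.2) ≤ ε * ‖q - p‖}

/-- The Fréchet subdifferential of a real-valued function (ε-form). -/
def fSubdiff {Y : Type*} [NormedAddCommGroup Y] [NormedSpace ℝ Y]
    (g : Y → ℝ) (y : Y) : Set (Y →L[ℝ] ℝ) :=
  {ys | ∀ ε : ℝ, 0 < ε → ∀ᶠ v in 𝓝 y, g y + ys (v - y) - ε * ‖v - y‖ ≤ g v}

/-- The normalized duality mapping `J(u) = {u* : ‖u*‖ = 1, ⟨u*,u⟩ = ‖u‖}`. -/
def dualityMap {Y : Type*} [NormedAddCommGroup Y] [NormedSpace ℝ Y]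
    (u : Y) : Set (Y →L[ℝ] ℝ) :=
  {us | ‖us‖ = 1 ∧ us u = ‖u‖}

/-- The subdifferential (g,ρ)-slope
`|∂F|_{g,ρ}(x,y) = inf{‖x*‖ : x* ∈ D*F(x,y)(∂g(y)+ρB*)}`. -/
noncomputable def subdiffGSlopeRho {X Y : Type*} [NormedAddCommGroup X] [NormedSpace ℝ X]
    [NormedAddCommGroup Y] [NormedSpace ℝ Y]
    (F : X → Set Y) (g : Y → ℝ) (ρ : ℝ) (p : X × Y) : ℝ≥0∞ :=
  ⨅ (xs : X →L[ℝ] ℝ) (_ : ∃ ys vs : Y →L[ℝ] ℝ, vs ∈ fSubdiff g p.2 ∧ ‖ys - vs‖ ≤ ρ ∧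
      (xs, -ys) ∈ prodNormalCone (svGraph F) p),
    ENNReal.ofReal ‖xs‖

/-- The subdifferential ρ-slope of `F`:
`|∂F|_ρ(x,y) = inf{‖x*‖ : x* ∈ D*F(x,y)(J(y−ȳ)+ρB*)}`. -/
noncomputable def subdiffSlopeJ {X Y : Type*} [NormedAddCommGroup X] [NormedSpace ℝ X]
    [NormedAddCommGroup Y] [NormedSpace ℝ Y]
    (F : X → Set Y) (ybar : Y) (ρ : ℝ) (p : X × Y) : ℝ≥0∞ :=
  ⨅ (xs : X →L[ℝ] ℝ) (_ : ∃ ys us : Y →L[ℝ] ℝ, us ∈ dualityMap (p.2 - ybar) ∧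
      ‖ys - us‖ ≤ ρ ∧ (xs, -ys) ∈ prodNormalCone (svGraph F) p),
    ENNReal.ofReal ‖xs‖

/-!
For `y ≠ ȳ`, the chain rule gives `∂g(y) = φ'(‖y - ȳ‖) • ∂‖· - ȳ‖(y)`, and since the norm is convex,
its Fréchet subdifferential off the origin is the set of global subgradients, which is `J(y - ȳ)`.
Hence, with `c = φ'(‖y - ȳ‖)`, one has `∂g(y) + ρB* = c • (J(y - ȳ) + (ρ / c)B*)`. As the Fréchet
normal cone is a cone, the coderivative is positively homogeneous and the factor `c` passes to the
infimum of the norms, which is the distance from `0`.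
-/

section Subdifferential

open scoped Pointwise

open Asymptotics

variable {Y : Type*} [NormedAddCommGroup Y] [NormedSpace ℝ Y] {f g h : Y → ℝ} {y : Y}
  {u : Y →L[ℝ] ℝ} {c : ℝ}

theorem fSubdiff_subset_of_isLittleO
    (hgh : (fun v => (h v - h y) - (g v - g y)) =o[𝓝 y] fun v => v - y) :
    fSubdiff g y ⊆ fSubdiff h y := by
  intro u hu ε hε
  filter_upwards [hu (ε / 2) (half_pos hε), hgh.def (half_pos hε)] with v hg hdiff
  linarith [(abs_le.1 hdiff).1]

theorem fSubdiff_eq_of_isLittleO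
    (hgh : (fun v => (h v - h y) - (g v - g y)) =o[𝓝 y] fun v => v - y) :
    fSubdiff g y = fSubdiff h y :=
  (fSubdiff_subset_of_isLittleO hgh).antisymm <|
    fSubdiff_subset_of_isLittleO (by simpa only [neg_sub] using hgh.neg_left)

theorem smul_mem_fSubdiff_const_mul (hc : 0 < c) (hu : u ∈ fSubdiff f y) :
    c • u ∈ fSubdiff (fun v => c * f v) y := by
  intro ε hε
  filter_upwards [hu (c⁻¹ * ε) (by positivity)] with v hv
  calc c * f y + c * u (v - y) - ε * ‖v - y‖
      = c * (f y + u (v - y) - c⁻¹ * ε * ‖v - y‖) := by field_simp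
    _ ≤ c * f v := by gcongr

theorem fSubdiff_const_mul (hc : 0 < c) :
    fSubdiff (fun v => c * f v) y = c • fSubdiff f y := by
  ext u
  rw [mem_smul_set_iff_inv_smul_mem₀ hc.ne']
  refine ⟨fun hu => ?_, fun hu => ?_⟩
  · simpa only [inv_mul_cancel_left₀ hc.ne'] using
      smul_mem_fSubdiff_const_mul (inv_pos.2 hc) hu
  · simpa only [smul_inv_smul₀ hc.ne'] using smul_mem_fSubdiff_const_mul hc hu

theorem fSubdiff_comp {φ : ℝ → ℝ} (hφ : HasDerivAt φ c (f y)) (hc : 0 < c)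
    (hf : (fun v => f v - f y) =O[𝓝 y] fun v => v - y) :
    fSubdiff (fun v => φ (f v)) y = c • fSubdiff f y := by
  have hf_tendsto : Tendsto f (𝓝 y) (𝓝 (f y)) :=
    tendsto_sub_nhds_zero_iff.1 (hf.trans_tendsto (tendsto_sub_nhds_zero_iff.2 tendsto_id))
  have hexpand : (fun v => (φ (f v) - φ (f y)) - (c * f v - c * f y)) =o[𝓝 y] fun v => v - y := by
    refine (((hasDerivAt_iff_isLittleO.1 hφ).comp_tendsto hf_tendsto).trans_isBigO hf).congr_left
      fun v => ?_
    simp only [Function.comp_apply, smul_eq_mul]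
    ring
  rw [← fSubdiff_const_mul hc, fSubdiff_eq_of_isLittleO hexpand]

theorem mem_fSubdiff_iff_of_convexOn (hf : ConvexOn ℝ univ f) :
    u ∈ fSubdiff f y ↔ ∀ v, f y + u (v - y) ≤ f v := by
  refine ⟨fun hu v => ?_, fun hu ε hε => .of_forall fun v => ?_⟩
  · have hle : ∀ ε > 0, f y + u (v - y) - ε * ‖v - y‖ ≤ f v := by
      intro ε hε
      have hconvex : ConvexOn ℝ univ fun v => f v - u v + ε * dist v y :=
        (hf.sub (u.toLinearMap.concaveOn convex_univ)).add
          ((convexOn_univ_dist y).smul hε.le)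
      have hmin : IsLocalMin (fun v => f v - u v + ε * dist v y) y := by
        filter_upwards [hu ε hε] with v hv
        rw [dist_self, dist_eq_norm]
        linarith [map_sub u v y]
      have hglobal := IsMinOn.of_isLocalMin_of_convex_univ hmin hconvex v
      rw [dist_self, dist_eq_norm] at hglobal
      linarith [map_sub u v y]
    have hlim : Tendsto (fun ε : ℝ => f y + u (v - y) - ε * ‖v - y‖) (𝓝[>] 0)
        (𝓝 (f y + u (v - y))) := by
      refine (Continuous.tendsto' ?_ 0 _ (by simp)).mono_left nhdsWithin_le_nhds
      fun_prop
    exact le_of_tendsto hlim (eventually_mem_nhdsWithin.mono hle)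
  · have : 0 ≤ ε * ‖v - y‖ := by positivity
    linarith [hu v]

theorem mem_dualityMap_iff_forall_le {w : Y} (hw : w ≠ 0) :
    u ∈ dualityMap w ↔ ∀ z, ‖w‖ + u (z - w) ≤ ‖z‖ := by
  refine ⟨fun ⟨hnorm, heq⟩ z => ?_, fun hu => ?_⟩
  · rw [map_sub, heq, add_sub_cancel]
    exact (le_abs_self _).trans (by simpa [hnorm] using u.le_opNorm z)
  · have hle : ∀ z, u z ≤ ‖z‖ := fun z => by
      have := hu (w + z)
      rw [add_sub_cancel_left] at this
      linarith [norm_add_le w z]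
    have heq : u w = ‖w‖ := by
      have := hu 0
      rw [zero_sub, map_neg, norm_zero] at this
      exact (hle w).antisymm (by linarith)
    have hnorm_le : ‖u‖ ≤ 1 := u.opNorm_le_bound zero_le_one fun z => by
      rw [one_mul, Real.norm_eq_abs, abs_le']
      exact ⟨hle z, by simpa using hle (-z)⟩
    have hle_norm : 1 * ‖w‖ ≤ ‖u‖ * ‖w‖ := by
      simpa only [heq, norm_norm, one_mul] using u.le_opNorm w
    exact ⟨hnorm_le.antisymm (le_of_mul_le_mul_right hle_norm (norm_pos_iff.2 hw)), heq⟩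

theorem fSubdiff_norm_sub {z : Y} (hy : y ≠ z) :
    fSubdiff (fun v => ‖v - z‖) y = dualityMap (y - z) := by
  have hconvex : ConvexOn ℝ univ fun v => ‖v - z‖ := by
    simpa only [dist_eq_norm] using convexOn_univ_dist z
  ext u
  rw [mem_fSubdiff_iff_of_convexOn hconvex, mem_dualityMap_iff_forall_le (sub_ne_zero.2 hy)]
  refine (Equiv.subRight z).forall_congr fun v => ?_
  rw [Equiv.subRight_apply, sub_sub_sub_cancel_right]

theorem fSubdiff_comp_norm_sub {φ : ℝ → ℝ} {z : Y} (hφ : HasDerivAt φ c ‖y - z‖) (hc : 0 < c)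
    (hy : y ≠ z) : fSubdiff (fun v => φ ‖v - z‖) y = c • dualityMap (y - z) := by
  have hlip : (fun v => ‖v - z‖ - ‖y - z‖) =O[𝓝 y] fun v => v - y :=
    .of_bound 1 <| .of_forall fun v => by
      simpa using abs_norm_sub_norm_le (v - z) (y - z)
  rw [fSubdiff_comp (f := fun v => ‖v - z‖) hφ hc hlip, fSubdiff_norm_sub hy]

end Subdifferential

section Coderivative

open scoped Pointwise

variable {X Y : Type*} [NormedAddCommGroup X] [NormedSpace ℝ X] [NormedAddCommGroup Y]
  [NormedSpace ℝ Y] {F : X → Set Y} {p : X × Y} {c : ℝ}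

theorem smul_mem_prodNormalCone {Ω : Set (X × Y)} {s : (X →L[ℝ] ℝ) × (Y →L[ℝ] ℝ)} (hc : 0 < c)
    (hs : s ∈ prodNormalCone Ω p) : c • s ∈ prodNormalCone Ω p := by
  refine ⟨hs.1, fun ε hε => ?_⟩
  filter_upwards [hs.2 (c⁻¹ * ε) (by positivity)] with q hq
  calc c * s.1 (q.1 - p.1) + c * s.2 (q.2 - p.2)
      = c * (s.1 (q.1 - p.1) + s.2 (q.2 - p.2)) := by ring
    _ ≤ c * (c⁻¹ * ε * ‖q - p‖) := by gcongr
    _ = ε * ‖q - p‖ := by field_simp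

/-- The image `D*F(p)(B)` of a set `B` of functionals under the Fréchet coderivative of `F` at `p`;
both slopes of `F` are distances from `0` to such images. -/
def coderivImage (F : X → Set Y) (p : X × Y) (B : Set (Y →L[ℝ] ℝ)) : Set (X →L[ℝ] ℝ) :=
  {xs | ∃ ys ∈ B, (xs, -ys) ∈ prodNormalCone (svGraph F) p}

theorem smul_mem_coderivImage_smul {B : Set (Y →L[ℝ] ℝ)} {xs : X →L[ℝ] ℝ} (hc : 0 < c)
    (hxs : xs ∈ coderivImage F p B) : c • xs ∈ coderivImage F p (c • B) := by
  obtain ⟨ys, hys, hnormal⟩ := hxs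
  refine ⟨c • ys, smul_mem_smul_set hys, ?_⟩
  simpa only [Prod.smul_mk, smul_neg] using smul_mem_prodNormalCone hc hnormal

theorem coderivImage_smul (hc : 0 < c) (B : Set (Y →L[ℝ] ℝ)) :
    coderivImage F p (c • B) = c • coderivImage F p B := by
  ext xs
  rw [mem_smul_set_iff_inv_smul_mem₀ hc.ne']
  refine ⟨fun hxs => ?_, fun hxs => ?_⟩
  · simpa only [inv_smul_smul₀ hc.ne'] using smul_mem_coderivImage_smul (inv_pos.2 hc) hxs
  · simpa only [smul_inv_smul₀ hc.ne'] using smul_mem_coderivImage_smul hc hxs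

theorem mem_coderivImage_add_closedBall {A : Set (Y →L[ℝ] ℝ)} {ρ : ℝ} {xs : X →L[ℝ] ℝ} :
    xs ∈ coderivImage F p (A + closedBall 0 ρ) ↔
      ∃ ys vs : Y →L[ℝ] ℝ, vs ∈ A ∧ ‖ys - vs‖ ≤ ρ ∧
        (xs, -ys) ∈ prodNormalCone (svGraph F) p := by
  constructor
  · rintro ⟨_, ⟨vs, hvs, b, hb, rfl⟩, hnormal⟩
    exact ⟨vs + b, vs, hvs, by simpa using hb, hnormal⟩
  · rintro ⟨ys, vs, hvs, hdist, hnormal⟩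
    exact ⟨ys, ⟨vs, hvs, ys - vs, by simpa using hdist, add_sub_cancel vs ys⟩, hnormal⟩

theorem subdiffGSlopeRho_eq_infEDist (F : X → Set Y) (g : Y → ℝ) (ρ : ℝ) (p : X × Y) :
    subdiffGSlopeRho F g ρ p =
      infEDist 0 (coderivImage F p (fSubdiff g p.2 + closedBall 0 ρ)) := by
  simp only [subdiffGSlopeRho, infEDist, mem_coderivImage_add_closedBall, edist_zero_left,
    ofReal_norm, enorm_eq_nnnorm]

theorem subdiffSlopeJ_eq_infEDist (F : X → Set Y) (ybar : Y) (ρ : ℝ) (p : X × Y) :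
    subdiffSlopeJ F ybar ρ p =
      infEDist 0 (coderivImage F p (dualityMap (p.2 - ybar) + closedBall 0 ρ)) := by
  simp only [subdiffSlopeJ, infEDist, mem_coderivImage_add_closedBall, edist_zero_left,
    ofReal_norm, enorm_eq_nnnorm]

theorem infEDist_zero_coderivImage_smul_add_closedBall (hc : 0 < c) (A : Set (Y →L[ℝ] ℝ))
    (ρ : ℝ) :
    infEDist 0 (coderivImage F p (c • A + closedBall 0 ρ)) =
      ENNReal.ofReal c * infEDist 0 (coderivImage F p (A + closedBall 0 (c⁻¹ * ρ))) := by
  have hball : c • closedBall (0 : Y →L[ℝ] ℝ) (c⁻¹ * ρ) = closedBall 0 ρ := by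
    rw [smul_closedBall' hc.ne', smul_zero, Real.norm_of_nonneg hc.le, mul_inv_cancel_left₀ hc.ne']
  have hscale := infEDist_smul₀ hc.ne' (coderivImage F p (A + closedBall 0 (c⁻¹ * ρ))) 0
  rwa [smul_zero, ← coderivImage_smul hc, smul_add, hball, ENNReal.smul_def, smul_eq_mul,
    ← enorm_eq_nnnorm, Real.enorm_of_nonneg hc.le] at hscale

theorem subdiffGSlope_eq_deriv_mul_subdiffSlope_general (F : X → Set Y) {φ : ℝ → ℝ} {ybar : Y}
    (hφ : HasDerivAt φ c ‖p.2 - ybar‖) (hc : 0 < c) (ρ : ℝ) (hy : p.2 ≠ ybar) :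
    subdiffGSlopeRho F (fun v => φ ‖v - ybar‖) ρ p =
      ENNReal.ofReal c * subdiffSlopeJ F ybar (c⁻¹ * ρ) p := by
  rw [subdiffGSlopeRho_eq_infEDist, fSubdiff_comp_norm_sub hφ hc hy,
    infEDist_zero_coderivImage_smul_add_closedBall hc, subdiffSlopeJ_eq_infEDist]

end Coderivative

/-- Proposition 6P1 (ii): for `g = φ∘‖·−ȳ‖`, the subdifferential (g,ρ)-slope factorizes
as `|∂F|_{g,ρ}(x,y) = φ'(‖y−ȳ‖)·|∂F|_{ξ_φ(y)ρ}(x,y)` where `ξ_φ(y) = 1/φ'(‖y−ȳ‖)`. -/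
theorem subdiffGSlope_eq_deriv_mul_subdiffSlope {X Y : Type*}
    [NormedAddCommGroup X] [NormedSpace ℝ X] [NormedAddCommGroup Y] [NormedSpace ℝ Y]
    (F : X → Set Y) (xbar : X) (ybar : Y)
    (hgraph : ybar ∈ F xbar)
    (φ φ' : ℝ → ℝ) (D : EReal)
    (hφ0 : φ 0 = 0)
    (hφnonneg : ∀ t : ℝ, 0 ≤ t → 0 ≤ φ t)
    (hφc0 : ContinuousWithinAt φ (Set.Ici 0) 0)
    (hderiv : ∀ t : ℝ, 0 < t → HasDerivAt φ (φ' t) t)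
    (hφ'pos : ∀ t : ℝ, 0 < t → 0 < φ' t)
    (hφ'cont : ContinuousOn φ' (Set.Ioi 0))
    (hD : Filter.Tendsto (fun t : ℝ => ((φ' t : ℝ) : EReal)) (𝓝[>] (0:ℝ)) (𝓝 D))
    (hDpos : 0 < D)
    (ρ : ℝ) (hρ : 0 < ρ) (p : X × Y) (hp : p ∈ svGraph F) (hy : p.2 ≠ ybar) :
    subdiffGSlopeRho F (fun v => φ ‖v - ybar‖) ρ p =
      ENNReal.ofReal (φ' ‖p.2 - ybar‖) *
        subdiffSlopeJ F ybar ((φ' ‖p.2 - ybar‖)⁻¹ * ρ) p := by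
  have hpos : 0 < ‖p.2 - ybar‖ := norm_sub_pos_iff.2 hy
  exact subdiffGSlope_eq_deriv_mul_subdiffSlope_general F (hderiv _ hpos) (hφ'pos _ hpos) ρ hy
end
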